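/- arXiv:0711.3057 — 2 statements merged into one kernel-verified Lean document; each statement's English description precedes it below -/
import Mathlib

section
/- Let k ≥ 2 be even and m ≥ 2. Then the minimum cardinality of a set T of k-cycles in S_{m(k−1)+1} such that T generates S_{m(k−1)+1} is exactly m; that is, there is a set of m k-cycles generating S_{m(k−1)+1}, and no set of fewer than m k-cycles generates it. -/
open Equiv Equiv.Perm MulAction
open scoped Pointwise

/-- The commutator of two permutations whose supports meet in exactly one point is a 3-cycle. -/
theorem isThreeCycle_commutator_of_support_inter_eq_singleton {α : Type*} [Fintype α]
    [DecidableEq α] {a b : Perm α} {p : α} (h : a.support ∩ b.support = {p}) :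
    (a * b * a⁻¹ * b⁻¹).IsThreeCycle := by
  have hmem (x : α) : (a x ≠ x ∧ b x ≠ x) ↔ x = p := by
    simpa using congrArg (x ∈ ·) h
  obtain ⟨hap, hbp⟩ := (hmem p).2 rfl
  have hbap : b (a p) = a p := by
    by_contra hne
    exact hap ((hmem (a p)).1 ⟨fun h' => hap (a.injective h'), hne⟩)
  have hdisj : Perm.Disjoint ((swap p (a p))⁻¹ * a) b := by
    intro x
    by_cases hbx : b x = x
    · exact Or.inr hbx
    left
    by_cases hx : x = p
    · simp [hx]
    · have hax : a x = x := by
        by_contra hax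
        exact hx ((hmem x).1 ⟨hax, hbx⟩)
      have hxap : x ≠ a p := fun h' => hbx (h' ▸ hbap)
      simp [hax, swap_apply_of_ne_of_ne hx hxap]
  have hconj : a * b * a⁻¹ = swap p (a p) * b * (swap p (a p))⁻¹ := by
    have := hdisj.commute.eq
    calc a * b * a⁻¹ = swap p (a p) * ((swap p (a p))⁻¹ * a * b) * a⁻¹ := by group
      _ = _ := by rw [this]; group
  have hprod : a * b * a⁻¹ * b⁻¹ = swap (a p) p * swap (a p) (b p) := by
    rw [hconj, swap_inv, mul_assoc, mul_assoc, ← mul_assoc b, ← swap_apply_apply, hbap,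
      swap_comm p, swap_comm (b p)]
  rw [hprod]
  refine isThreeCycle_swap_mul_swap_same hap (fun h' => ?_) (Ne.symm hbp)
  exact hbp (b.injective (h' ▸ hbap))

/-- A subgroup containing the alternating group and an odd permutation is everything. -/
theorem eq_top_of_alternatingGroup_le_of_sign_eq_neg_one {α : Type*} [Fintype α] [DecidableEq α]
    {G : Subgroup (Perm α)} (hG : alternatingGroup α ≤ G) {g : Perm α} (hg : g ∈ G)
    (hsign : sign g = -1) : G = ⊤ := by
  refine (Subgroup.eq_top_iff' G).2 fun x => ?_
  rcases Int.units_eq_one_or (sign x) with hx | hx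
  · exact hG (mem_alternatingGroup.2 hx)
  · have : x * g ∈ G := hG (mem_alternatingGroup.2 (by simp [hx, hsign]))
    exact (Subgroup.mul_mem_cancel_right G hg).1 this

/-- At least two cycles, any two of which share exactly the point `p`, and whose supports cover the
whole type, generate a primitive group. -/
theorem isPreprimitive_closure_range_of_star {α ι : Type*} [Fintype α] [DecidableEq α]
    [Nontrivial ι] {c : ι → Perm α} {p : α} (hc : ∀ i, (c i).IsCycle)
    (hinter : ∀ i j, i ≠ j → (c i).support ∩ (c j).support = {p})
    (hcover : ∀ x, ∃ i, x ∈ (c i).support) :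
    IsPreprimitive (Subgroup.closure (Set.range c)) α := by
  have hp (i : ι) : p ∈ (c i).support := by
    obtain ⟨j, hj⟩ := exists_ne i
    exact (Finset.mem_inter.1 (hinter i j hj.symm ▸ Finset.mem_singleton_self p)).1
  have hmem (i : ι) : c i ∈ Subgroup.closure (Set.range c) :=
    Subgroup.subset_closure ⟨i, rfl⟩
  obtain ⟨i₀⟩ : Nonempty ι := inferInstance
  refine IsPreprimitive.of_isTrivialBlock_of_notMem_fixedPoints (a := p) (fun hfix => ?_) ?_
  · exact mem_support.1 (hp i₀) (hfix ⟨c i₀, hmem i₀⟩)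
  intro B hpB hB
  refine or_iff_not_imp_left.2 fun hnt => ?_
  have hstep (i j : ι) (hij : i ≠ j) (x : α) (hxB : x ∈ B) (hxp : x ≠ p)
      (hx : x ∈ (c i).support) : ∀ y ∈ (c j).support, y ∈ B := by
    intro y hy
    have hfix : c j x = x := by
      by_contra hne
      have : x ∈ (c i).support ∩ (c j).support := Finset.mem_inter.2 ⟨hx, mem_support.2 hne⟩
      rw [hinter i j hij] at this
      exact hxp (Finset.mem_singleton.1 this)
    obtain ⟨n, hn⟩ := (hc j).exists_pow_eq (mem_support.1 (hp j)) (mem_support.1 hy)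
    let g : Subgroup.closure (Set.range c) := ⟨c j, hmem j⟩ ^ n
    have hgx : g • x = x := pow_apply_eq_self_of_apply_eq_self hfix n
    have hgB : g • B = B := hB.smul_eq_of_mem hxB (hgx.symm ▸ hxB)
    rw [← hgB, ← hn]
    exact Set.smul_mem_smul_set (a := g) hpB
  obtain ⟨x, hxB, hxp⟩ := (Set.not_subsingleton_iff.1 hnt).exists_ne p
  obtain ⟨i, hi⟩ := hcover x
  obtain ⟨j, hji⟩ := exists_ne i
  have hj := hstep i j hji.symm x hxB hxp hi
  have hcj : c j p ∈ (c j).support := apply_mem_support.2 (hp j)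
  have hi' := hstep j i hji (c j p) (hj _ hcj) (mem_support.1 (hp j)) hcj
  have hci : c i p ∈ (c i).support := apply_mem_support.2 (hp i)
  refine Set.eq_univ_of_forall fun y => ?_
  obtain ⟨l, hl⟩ := hcover y
  by_cases hli : l = i
  · exact hi' y (hli ▸ hl)
  · exact hstep i l (Ne.symm hli) (c i p) (hi' _ hci) (mem_support.1 (hp i)) hci y hl

/-- At least two even-length cycles, any two of which share exactly the point `p`, and whose
supports cover the whole type, generate the symmetric group. -/
theorem closure_range_eq_top_of_star {α ι : Type*} [Fintype α] [DecidableEq α]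
    [Nontrivial ι] {c : ι → Perm α} {p : α} (hc : ∀ i, (c i).IsCycle)
    (heven : ∀ i, Even (c i).support.card)
    (hinter : ∀ i j, i ≠ j → (c i).support ∩ (c j).support = {p})
    (hcover : ∀ x, ∃ i, x ∈ (c i).support) :
    Subgroup.closure (Set.range c) = ⊤ := by
  have hmem (i : ι) : c i ∈ Subgroup.closure (Set.range c) :=
    Subgroup.subset_closure ⟨i, rfl⟩
  obtain ⟨i, j, hij⟩ := exists_pair_ne ι
  have halt := alternatingGroup_le_of_isPreprimitive_of_isThreeCycle_mem
    (isPreprimitive_closure_range_of_star hc hinter hcover)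
    (isThreeCycle_commutator_of_support_inter_eq_singleton (hinter i j hij))
    (mul_mem (mul_mem (mul_mem (hmem i) (hmem j)) (inv_mem (hmem i))) (inv_mem (hmem j)))
  refine eq_top_of_alternatingGroup_le_of_sign_eq_neg_one halt (hmem i) ?_
  rw [(hc i).sign, (heven i).neg_one_pow]

/-- Every finset with at least two elements is the support of a cycle. -/
theorem exists_isCycle_support_eq {α : Type*} [Fintype α] [DecidableEq α] {s : Finset α}
    (hs : 1 < s.card) : ∃ f : Perm α, f.IsCycle ∧ f.support = s := by
  obtain ⟨f, hf, hsupp⟩ := s.exists_cycleOn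
  have hnt : (s : Set α).Nontrivial := Finset.one_lt_card_iff_nontrivial.1 hs
  refine ⟨f, isCycle_iff_exists_isCycleOn.2 ⟨s, hnt, hf, fun x hx => hsupp (mem_support.2 hx)⟩,
    hsupp.antisymm fun x hx => mem_support.2 (hf.apply_ne hnt hx)⟩

/-- If `T` generates the symmetric group and each element of `T` moves at most `d + 1` points, then
there are at most `T.card * d + 1` points. -/
theorem card_le_of_closure_eq_top {α : Type*} [Fintype α] [DecidableEq α]
    {T : Finset (Perm α)} {d : ℕ} (hT : ∀ g ∈ T, g.support.card ≤ d + 1)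
    (hgen : Subgroup.closure (T : Set (Perm α)) = ⊤) :
    Fintype.card α ≤ T.card * d + 1 := by
  cases isEmpty_or_nonempty α
  · simp
  obtain ⟨p⟩ : Nonempty α := inferInstance
  let good : Finset (Finset (Perm α)) := {U ∈ T.powerset | ∃ S : Finset α, p ∈ S ∧
    (∀ g ∈ U, g.support ⊆ S) ∧ S.card ≤ U.card * d + 1}
  have hne : good.Nonempty := ⟨∅, by
    simp only [good, Finset.mem_filter, Finset.empty_mem_powerset, true_and]
    exact ⟨{p}, by simp⟩⟩
  obtain ⟨U, hU, hmax⟩ := good.exists_max_image Finset.card hne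
  obtain ⟨hUT, S, hpS, hUS, hScard⟩ := by simpa [good] using hU
  have hinv : ∀ g ∈ T, ∀ x ∈ S, g x ∈ S := by
    intro g hg x hx
    by_contra hgx
    have hxg : x ∈ g.support := mem_support.2 fun h => hgx (h.symm ▸ hx)
    have hgU : g ∉ U := fun h => hgx (hUS g h (apply_mem_support.2 hxg))
    have hcard : (S ∪ g.support).card ≤ (insert g U).card * d + 1 := by
      have h1 := Finset.card_union_add_card_inter S g.support
      have h2 : 0 < (S ∩ g.support).card :=
        Finset.card_pos.2 ⟨x, Finset.mem_inter.2 ⟨hx, hxg⟩⟩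
      have h3 := hT g hg
      rw [Finset.card_insert_of_notMem hgU, add_mul]
      omega
    have hgood : insert g U ∈ good := by
      simp only [good, Finset.mem_filter, Finset.mem_powerset]
      refine ⟨Finset.insert_subset hg hUT, S ∪ g.support, Finset.mem_union_left _ hpS, ?_, hcard⟩
      intro f hf
      rcases Finset.mem_insert.1 hf with rfl | hf
      · exact Finset.subset_union_right
      · exact (hUS f hf).trans Finset.subset_union_left
    have := hmax _ hgood
    rw [Finset.card_insert_of_notMem hgU] at this
    omega
  have hstab : Subgroup.closure (T : Set (Perm α)) ≤ stabilizer (Perm α) (S : Set α) := by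
    refine (Subgroup.closure_le _).2 fun g hg => ?_
    refine (mem_stabilizer_set_iff_smul_set_subset S.finite_toSet).2 ?_
    rintro _ ⟨x, hx, rfl⟩
    exact hinv g hg x hx
  have huniv : S = Finset.univ := by
    refine Finset.eq_univ_of_forall fun x => ?_
    have hx : swap p x ∈ stabilizer (Perm α) (S : Set α) := hstab (hgen ▸ Subgroup.mem_top _)
    have := (mem_stabilizer_set.1 hx p).2 hpS
    simpa using this
  calc Fintype.card α = S.card := by rw [huniv, Finset.card_univ]
    _ ≤ U.card * d + 1 := hScard
    _ ≤ T.card * d + 1 := by gcongr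

/-- A set with a base point and `ι × κ` further points carries cycles indexed by `ι`, each of
length `card κ + 1`, that cover the set and pairwise share exactly the base point. -/
theorem exists_star_of_cycles {α ι κ : Type*} [Fintype α] [DecidableEq α] [Fintype κ] [Nonempty κ]
    (e : Option (ι × κ) ≃ α) :
    ∃ c : ι → Perm α, (∀ i, (c i).IsCycle ∧ (c i).support.card = Fintype.card κ + 1) ∧
      ∀ i x, x ∈ (c i).support ↔ x = e none ∨ ∃ k, x = e (some (i, k)) := by
  have hinj (i : ι) : Function.Injective fun o : Option κ => e (o.map (Prod.mk i)) :=
    e.injective.comp (Option.map_injective (Prod.mk_right_injective i))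
  let s (i : ι) : Finset α := Finset.univ.image fun o : Option κ => e (o.map (Prod.mk i))
  have hs (i : ι) : (s i).card = Fintype.card κ + 1 := by
    simp only [s, Finset.card_image_of_injective _ (hinj i), Finset.card_univ,
      Fintype.card_option]
  have hpos : 0 < Fintype.card κ := Fintype.card_pos
  choose c hc hsupp using fun i => exists_isCycle_support_eq (s := s i) (by rw [hs]; omega)
  refine ⟨c, fun i => ⟨hc i, by rw [hsupp, hs]⟩, fun i x => ?_⟩
  simp [hsupp, s, Option.exists, eq_comm]

/-- For even `k ≥ 2` and `m ≥ 2`, the minimum cardinality of a set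
of `k`-cycles generating `S_{m(k−1)+1}` is exactly `m`:
`m` belongs to the set of achievable cardinalities and is a lower bound for it. -/
theorem stmt_5 (k m : ℕ) (hk : 2 ≤ k) (hkeven : Even k) (hm : 2 ≤ m) :
    IsLeast {c : ℕ | ∃ T : Finset (Equiv.Perm (Fin (m * (k - 1) + 1))),
        (∀ g ∈ T, g.IsCycle ∧ g.support.card = k) ∧
        Subgroup.closure (T : Set (Equiv.Perm (Fin (m * (k - 1) + 1)))) = ⊤ ∧
        T.card = c} m := by
  generalize hkd : k - 1 = d
  obtain rfl : k = d + 1 := by omega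
  have hd : 0 < d := by omega
  constructor
  · have : Nonempty (Fin d) := ⟨⟨0, hd⟩⟩
    have : Nontrivial (Fin m) := Fin.nontrivial_iff_two_le.2 hm
    let e : Option (Fin m × Fin d) ≃ Fin (m * d + 1) :=
      Fintype.equivOfCardEq (by simp)
    obtain ⟨c, hc, hsupp⟩ := exists_star_of_cycles e
    simp only [Fintype.card_fin] at hc
    have hinter (i j : Fin m) (hij : i ≠ j) : (c i).support ∩ (c j).support = {e none} := by
      ext x
      simp only [Finset.mem_inter, hsupp, Finset.mem_singleton]
      refine ⟨?_, fun h => ⟨Or.inl h, Or.inl h⟩⟩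
      rintro ⟨rfl | ⟨a, rfl⟩, h | ⟨b, h⟩⟩
      · rfl
      · rfl
      · exact h
      · simp [hij] at h
    have hcover (x : Fin (m * d + 1)) : ∃ i, x ∈ (c i).support := by
      obtain ⟨o, rfl⟩ := e.surjective x
      rcases o with _ | ⟨i, a⟩
      · exact ⟨⟨0, by omega⟩, (hsupp _ _).2 (Or.inl rfl)⟩
      · exact ⟨i, (hsupp _ _).2 (Or.inr ⟨a, rfl⟩)⟩
    have hinj : Function.Injective c := by
      intro i j hij
      by_contra hne
      have h := congrArg Finset.card (hinter i j hne)
      rw [← hij, Finset.inter_self, (hc i).2, Finset.card_singleton] at h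
      omega
    refine ⟨Finset.univ.image c, by simpa using hc, ?_, ?_⟩
    · rw [Finset.coe_image, Finset.coe_univ, Set.image_univ]
      exact closure_range_eq_top_of_star (fun i => (hc i).1) (fun i => (hc i).2 ▸ hkeven)
        hinter hcover
    · simp [Finset.card_image_of_injective _ hinj]
  · rintro _ ⟨T, hT, hgen, rfl⟩
    have h := card_le_of_closure_eq_top (fun g hg => (hT g hg).2.le) hgen
    rw [Fintype.card_fin, Nat.add_le_add_iff_right] at h
    exact Nat.le_of_mul_le_mul_right h hd
end

section
/- Let A = (a_1, …, a_k) be a nonempty multiset of integers with each a_i ≥ 2 such that c(A) = Σ_i (a_i − 1) is odd. Then for all n ≥ c(A)·Φ_{2k}(2k) + 1, where Φ_{2k} denotes the (2k)-th cyclotomic polynomial, the minimum cardinality of a subset T of the extended conjugacy class C(A) in S_n such that T generates S_n is exactly ⌈(n−1)/c(A)⌉. -/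
/-- A finite set can be covered by `l` pieces of cardinality at most `c`. -/
theorem Finset.exists_cover_card_le {α : Type*} {R : Finset α} {c l : ℕ} (hR : R.card ≤ l * c) :
    ∃ P : Fin l → Finset α, (∀ j, (P j).card ≤ c) ∧ ∀ x ∈ R, ∃ j, x ∈ P j := by
  obtain ⟨e⟩ : Nonempty (R ↪ Fin l × Fin c) :=
    Function.Embedding.nonempty_of_card_le (by simpa using hR)
  refine ⟨fun j => (Finset.univ.filter fun x => (e x).1 = j).map
      ⟨Subtype.val, Subtype.val_injective⟩, fun j => ?_, fun x hx => ⟨(e ⟨x, hx⟩).1, by simp [hx]⟩⟩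
  rw [Finset.card_map]
  refine (Finset.card_le_card_of_injOn (fun x => (e x).2) (t := Finset.univ) (by simp)
    fun x hx y hy hxy => e.injective (Prod.ext ?_ hxy)).trans (by simp)
  simp only [Finset.coe_filter, Finset.mem_univ, true_and, Set.mem_ofPred_eq] at hx hy
  rw [hx, hy]

namespace Equiv.Perm

open MulAction
open scoped Pointwise

theorem SameCycle.exists_mem_apply_eq {α : Type*} {H : Subgroup (Perm α)} {g : Perm α} (hg : g ∈ H)
    {p x y : α} (hxy : g.SameCycle x y) (hx : ∃ h ∈ H, h p = x) : ∃ h ∈ H, h p = y := by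
  obtain ⟨i, rfl⟩ := hxy
  obtain ⟨h, hh, rfl⟩ := hx
  exact ⟨g ^ i * h, mul_mem (zpow_mem hg i) hh, mul_apply _ _ _⟩

variable {α : Type*} [Fintype α] [DecidableEq α]

/-- A set of representatives of the nontrivial cycles of a permutation. -/
theorem exists_cycle_representatives (g : Perm α) :
    ∃ R ⊆ g.support, R.card = Multiset.card g.cycleType ∧
      (∀ x ∈ g.support, ∃ r ∈ R, g.SameCycle r x) ∧
      ∀ r ∈ R, ∀ s ∈ R, g.SameCycle r s → r = s := by
  obtain ⟨b⟩ := Basis.nonempty g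
  have hcyc (c : g.cycleFactorsFinset) : (c : Perm α) = g.cycleOf (b c) :=
    cycle_is_cycleOf (b.mem_support_self c) c.2
  have hsupp (c : g.cycleFactorsFinset) : b c ∈ g.support := by
    rw [← cycleOf_mem_cycleFactorsFinset_iff, ← hcyc]
    exact c.2
  have hinj : Function.Injective b := fun c d h => Subtype.ext <| by
    rw [hcyc c, hcyc d, h]
  refine ⟨Finset.univ.image b, ?_, ?_, fun x hx => ?_, ?_⟩
  · simpa [Finset.image_subset_iff] using fun c hc => mem_support.1 (hsupp ⟨c, hc⟩)
  · rw [Finset.card_image_of_injective _ hinj, cycleType_def]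
    simp
  · refine ⟨b ⟨g.cycleOf x, cycleOf_mem_cycleFactorsFinset_iff.2 hx⟩, by simp, ?_⟩
    rw [sameCycle_iff_cycleOf_eq_of_mem_support (hsupp _) hx, ← hcyc]
  · simp only [Finset.mem_image, Finset.mem_univ, true_and]
    rintro _ ⟨c, rfl⟩ _ ⟨d, rfl⟩ h
    rw [sameCycle_iff_cycleOf_eq_of_mem_support (hsupp _) (hsupp _), ← hcyc, ← hcyc] at h
    rw [Subtype.ext h]

/-- Two flags of finite sets with the same cardinalities are related by a permutation. -/
theorem exists_perm_of_card_eq {R S K U : Finset α} (hRS : R ⊆ S) (hKU : K ⊆ U)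
    (hRK : R.card = K.card) (hSU : S.card = U.card) :
    ∃ σ : Perm α, (∀ x, σ x ∈ K ↔ x ∈ R) ∧ ∀ x, σ x ∈ U ↔ x ∈ S := by
  have hfib : ∀ c : Prop × Prop, Nonempty
      ({x // ((x ∈ R, x ∈ S) : Prop × Prop) = c} ≃ {x // ((x ∈ K, x ∈ U) : Prop × Prop) = c}) := by
    classical
    rintro ⟨p, q⟩
    refine Fintype.card_eq.1 ?_
    rw [Fintype.card_subtype, Fintype.card_subtype]
    by_cases hp : p <;> by_cases hq : q
    · convert hRK using 2 <;> ext x <;> simp [hp, hq] <;> grind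
    · convert rfl using 2
      ext x
      simp [hp, hq]
      grind
    · have h1 := Finset.card_sdiff_of_subset hRS
      have h2 := Finset.card_sdiff_of_subset hKU
      rw [hRK, hSU, ← h2] at h1
      convert h1 using 2 <;> ext x <;> simp [hp, hq, and_comm]
    · have h1 := Finset.card_compl S
      have h2 := Finset.card_compl U
      rw [hSU, ← h2] at h1
      convert h1 using 2 <;> ext x <;> simp [hp, hq] <;> grind
  have e := fun c => (hfib c).some
  have hσ := Equiv.ofFiberEquiv_map e
  simp only [Prod.mk.injEq, eq_iff_iff] at hσ
  exact ⟨Equiv.ofFiberEquiv e, fun x => (hσ x).1, fun x => (hσ x).2⟩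

/-- A permutation of a given cycle type can be placed on a prescribed support, with prescribed
representatives of its cycles. -/
theorem exists_cycleType_eq_of_support {A : Multiset ℕ} (hA : ∀ a ∈ A, 2 ≤ a)
    {K U : Finset α} (hKU : K ⊆ U) (hK : K.card = Multiset.card A) (hU : U.card = A.sum) :
    ∃ g : Perm α, g.cycleType = A ∧ g.support = U ∧ ∀ x ∈ U, ∃ r ∈ K, g.SameCycle r x := by
  obtain ⟨g, hg⟩ := (exists_with_cycleType_iff α).2 ⟨hU ▸ Finset.card_le_univ U, hA⟩
  obtain ⟨R, hRg, hR, hrep, -⟩ := exists_cycle_representatives g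
  obtain ⟨σ, hσK, hσU⟩ := exists_perm_of_card_eq hRg hKU (by rw [hR, hg, hK])
    (by rw [hU, ← hg, sum_cycleType])
  refine ⟨σ * g * σ⁻¹, by rw [cycleType_conj, hg], ?_, fun x hx => ?_⟩
  · ext x
    rw [support_conj, Finset.mem_map_equiv, ← hσU, Equiv.apply_symm_apply]
  · obtain ⟨y, rfl⟩ := σ.surjective x
    obtain ⟨r, hr, hry⟩ := hrep y ((hσU y).1 hx)
    exact ⟨σ r, (hσK r).2 hr, hry.conj⟩

/-- The commutator of two permutations moving exactly one common point is a 3-cycle. -/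
theorem isThreeCycle_commutator {g h : Perm α} {p : α} (hgh : g.support ∩ h.support = {p}) :
    IsThreeCycle (g * h * g⁻¹ * h⁻¹) := by
  have hmem : ∀ x, g x ≠ x → h x ≠ x → x = p := fun x hg hh => by
    rw [← Finset.mem_singleton, ← hgh, Finset.mem_inter, mem_support, mem_support]
    exact ⟨hg, hh⟩
  have hp : g p ≠ p ∧ h p ≠ p := by
    rw [← mem_support, ← mem_support, ← Finset.mem_inter, hgh, Finset.mem_singleton]
  obtain ⟨hgp, hhp⟩ := hp
  have hg_hp : g (h p) = h p := by
    by_contra hne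
    exact hhp (hmem _ hne fun h' => hhp (h.injective h'))
  have hne : g p ≠ h p := fun h' => hhp (g.injective (by rw [hg_hp, h']))
  have key : g * h * g⁻¹ * h⁻¹ = swap (h p) (g p) * swap (h p) p := by
    have hcomm : Commute (swap (h p) p * h) g := by
      refine Disjoint.commute fun x => ?_
      by_cases hgx : g x = x
      · exact Or.inr hgx
      · left
        rcases eq_or_ne x p with rfl | hxp
        · simp
        · have hhx : h x = x := by
            by_contra hhx
            exact hxp (hmem x hgx hhx)
          rw [mul_apply, hhx]
          exact swap_apply_of_ne_of_ne (fun h' => hgx (h' ▸ hg_hp)) hxp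
    have hconj : h * g⁻¹ = swap (h p) p * g⁻¹ * swap (h p) p * h := by
      calc h * g⁻¹ = swap (h p) p * ((swap (h p) p * h) * g⁻¹) := by simp [← mul_assoc]
        _ = _ := by rw [hcomm.inv_right.eq]; simp only [mul_assoc]
    calc g * h * g⁻¹ * h⁻¹ = g * (h * g⁻¹) * h⁻¹ := by simp only [mul_assoc]
      _ = g * swap (h p) p * g⁻¹ * swap (h p) p := by rw [hconj]; group
      _ = _ := by rw [← swap_apply_apply, hg_hp]
  rw [key]
  exact isThreeCycle_swap_mul_swap_same hne.symm hhp hgp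

/-- A lower bound for the number of permutations needed to generate the symmetric group, in terms
of the number of points they move and of their cycles. -/
theorem card_le_of_closure_eq_top [Nonempty α] {c : ℕ} {T : Finset (Perm α)}
    (hc : ∀ g ∈ T, g.support.card ≤ c + Multiset.card g.cycleType)
    (hT : Subgroup.closure (T : Set (Perm α)) = ⊤) :
    Fintype.card α ≤ c * T.card + 1 := by
  choose R hRg hR hrep huniq using exists_cycle_representatives (α := α)
  let E : Finset (Sym2 α) := T.biUnion fun g => (g.support \ R g).image fun x => s(x, g x)
  have hE : E.card ≤ c * T.card := by
    rw [mul_comm]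
    refine Finset.card_biUnion_le_card_mul _ _ _ fun g hg => Finset.card_image_le.trans ?_
    rw [Finset.card_sdiff_of_subset (hRg g), hR]
    have := hc g hg
    omega
  let G : SimpleGraph α := SimpleGraph.fromEdgeSet E
  have hstep : ∀ g ∈ T, ∀ x, x ∉ R g → G.Reachable x (g x) := fun g hg x hx => by
    by_cases hgx : g x = x
    · rw [hgx]
    · refine SimpleGraph.Adj.reachable ?_
      simp only [G, SimpleGraph.fromEdgeSet_adj, E]
      refine ⟨?_, Ne.symm hgx⟩
      simp only [Finset.coe_biUnion, Set.mem_iUnion]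
      exact ⟨g, hg, Finset.mem_coe.2 (Finset.mem_image_of_mem _ (by simp [hgx, hx]))⟩
  have hmove : ∀ g ∈ T, ∀ x, G.Reachable x (g x) := fun g hg x => by
    by_cases hx : x ∈ R g
    · have hpow : ∀ i : ℕ, G.Reachable (g x) ((g ^ i) (g x)) := fun i => by
        induction i with
        | zero => exact SimpleGraph.Reachable.refl _
        | succ i ih =>
          rw [pow_succ', mul_apply]
          by_cases hi : (g ^ i) (g x) ∈ R g
          · have : x = (g ^ i) (g x) := huniq g x hx _ hi ⟨i + 1, by
              rw [zpow_add_one, zpow_natCast, mul_apply]⟩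
            rw [← this]
          · exact ih.trans (hstep g hg _ hi)
      obtain ⟨i, -, hi⟩ := (sameCycle_apply_left.2 (SameCycle.refl g x)).exists_pow_eq'
      simpa only [hi] using (hpow i).symm
    · exact hstep g hg x hx
  have hall : ∀ g : Perm α, ∀ x, G.Reachable x (g x) := fun g => by
    have hg : g ∈ Subgroup.closure (T : Set (Perm α)) := hT ▸ Subgroup.mem_top g
    induction hg using Subgroup.closure_induction with
    | mem g hg => exact hmove g hg
    | one => exact fun x => SimpleGraph.Reachable.refl x
    | mul g h _ _ ihg ihh => exact fun x => (ihh x).trans (ihg (h x))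
    | inv g _ ih => exact fun x => by simpa using (ih (g⁻¹ x)).symm
  have hconn : G.Connected :=
    ⟨fun x y => by simpa using hall (swap x y) x⟩
  have hcard := hconn.card_vert_le_card_edgeSet_add_one
  rw [Nat.card_eq_fintype_card] at hcard
  have : Nat.card G.edgeSet ≤ E.card := by
    rw [Nat.card_coe_set_eq, ← Set.ncard_coe_finset]
    refine Set.ncard_le_ncard ?_ E.finite_toSet
    simp only [G, SimpleGraph.edgeSet_fromEdgeSet]
    exact Set.sdiff_subset
  omega

theorem eq_top_of_alternatingGroup_le {H : Subgroup (Perm α)} (hH : alternatingGroup α ≤ H)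
    {g : Perm α} (hg : g ∈ H) (hsign : sign g = -1) : H = ⊤ := by
  refine (Subgroup.eq_top_iff' H).2 fun x => ?_
  rcases Int.units_eq_one_or (sign x) with hx | hx
  · exact hH (mem_alternatingGroup.2 hx)
  · rw [← mul_inv_cancel_left g x]
    exact mul_mem hg (hH (mem_alternatingGroup.2 (by simp [hsign, hx])))

/-- A transitive group generated by permutations whose supports meet pairwise exactly in `p`,
together with permutations fixing `p`, is primitive. -/
theorem isPreprimitive_of_star {ι : Type*} [Nontrivial ι] {p : α} {g : ι → Perm α}
    {F : Set (Perm α)} (hg : Pairwise fun i j => (g i).support ∩ (g j).support = {p})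
    (hF : ∀ f ∈ F, f p = p)
    (htrans : ∀ x, ∃ h ∈ Subgroup.closure (Set.range g ∪ F), h p = x) :
    IsPreprimitive (Subgroup.closure (Set.range g ∪ F)) α := by
  set H := Subgroup.closure (Set.range g ∪ F) with hH
  have : IsPretransitive H α := (isPretransitive_iff_base p).2 fun x => by
    obtain ⟨h, hh, rfl⟩ := htrans x
    exact ⟨⟨h, hh⟩, rfl⟩
  have hgH (i : ι) : g i ∈ H := Subgroup.subset_closure (Or.inl ⟨i, rfl⟩)
  refine IsPreprimitive.of_isTrivialBlock_base p fun {B} hpB hB => ?_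
  have hinv : ∀ h ∈ H, ∀ x ∈ B, h x ∈ B → ∀ y ∈ B, h y ∈ B := fun h hh x hx hhx y hy => by
    have := hB.smul_eq_of_mem (g := ⟨h, hh⟩) hx hhx
    rw [← this]
    exact Set.smul_mem_smul_set hy
  refine or_iff_not_imp_left.2 fun hsub => ?_
  obtain ⟨y, hyB, hyp⟩ := (Set.not_subsingleton_iff.1 hsub).exists_ne p
  have hfix : ∀ {i j : ι}, i ≠ j → ∀ {x : α}, x ≠ p → g i x ≠ x → g j x = x := by
    intro i j hij x hxp hi
    by_contra hj
    refine hxp (Finset.mem_singleton.1 ?_)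
    rw [← hg hij, Finset.mem_inter, mem_support, mem_support]
    exact ⟨hi, hj⟩
  have hmoved (i : ι) : g i p ≠ p := by
    obtain ⟨j, hj⟩ := exists_ne i
    have : p ∈ (g i).support ∩ (g j).support := by rw [hg hj.symm, Finset.mem_singleton]
    exact mem_support.1 (Finset.mem_inter.1 this).1
  have hgB (i : ι) : ∀ x ∈ B, g i x ∈ B := by
    by_cases hy : g i y = y
    · exact hinv _ (hgH i) y hyB (hy.symm ▸ hyB)
    · obtain ⟨j, hj⟩ := exists_ne i
      have hjp : g j p ∈ B :=
        hinv _ (hgH j) y hyB ((hfix hj.symm hyp hy).symm ▸ hyB) p hpB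
      have hij : g i (g j p) = g j p :=
        hfix hj (hmoved j) fun h => hmoved j ((g j).injective h)
      exact hinv _ (hgH i) _ hjp (hij.symm ▸ hjp)
  have hfB : ∀ f ∈ F, ∀ x ∈ B, f x ∈ B := fun f hf =>
    hinv f (Subgroup.subset_closure (Or.inr hf)) p hpB ((hF f hf).symm ▸ hpB)
  have hle : H ≤ stabilizer (Perm α) B := by
    rw [hH, Subgroup.closure_le]
    rintro h (⟨i, rfl⟩ | hf) <;>
      refine (mem_stabilizer_set_iff_smul_set_subset B.toFinite).2 ?_ <;>
      rintro _ ⟨x, hx, rfl⟩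
    · exact hgB i x hx
    · exact hfB h hf x hx
  refine Set.eq_univ_of_forall fun x => ?_
  obtain ⟨h, hh, rfl⟩ := htrans x
  rw [← mem_stabilizer_iff.1 (hle hh)]
  exact Set.smul_mem_smul_set hpB

theorem closure_eq_top_of_star {ι : Type*} [Nontrivial ι] {p : α} {g : ι → Perm α}
    {F : Set (Perm α)} (hg : Pairwise fun i j => (g i).support ∩ (g j).support = {p})
    (hF : ∀ f ∈ F, f p = p) (hsign : ∀ i, sign (g i) = -1)
    (htrans : ∀ x, ∃ h ∈ Subgroup.closure (Set.range g ∪ F), h p = x) :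
    Subgroup.closure (Set.range g ∪ F) = ⊤ := by
  obtain ⟨i, j, hij⟩ := exists_pair_ne ι
  have hgH (i : ι) : g i ∈ Subgroup.closure (Set.range g ∪ F) :=
    Subgroup.subset_closure (Or.inl ⟨i, rfl⟩)
  exact eq_top_of_alternatingGroup_le
    (alternatingGroup_le_of_isPreprimitive_of_isThreeCycle_mem (isPreprimitive_of_star hg hF htrans)
      (isThreeCycle_commutator (hg hij))
      (mul_mem (mul_mem (mul_mem (hgH i) (hgH j)) (inv_mem (hgH i))) (inv_mem (hgH j))))
    (hgH i) (hsign i)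

theorem exists_generators_of_cycleType {A : Multiset ℕ} (hA : ∀ a ∈ A, 2 ≤ a) {c k l : ℕ}
    (hk : Multiset.card A = k + 1) (hsum : A.sum = c + (k + 1)) (hodd : Odd c)
    (hlow : (k + 2) * (c + k) < Fintype.card α)
    (hupp : Fintype.card α ≤ c * (k + 2 + l) + 1) :
    ∃ T : Finset (Perm α), (∀ g ∈ T, g.cycleType = A) ∧
      Subgroup.closure (T : Set (Perm α)) = ⊤ ∧ T.card ≤ k + 2 + l := by
  have hc : 0 < c := hodd.pos
  obtain ⟨p⟩ : Nonempty α := Fintype.card_pos_iff.1 (by omega)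
  obtain ⟨e⟩ : Nonempty (Fin (k + 2) × (Fin c ⊕ Fin k) ↪ {x : α // x ≠ p}) :=
    Function.Embedding.nonempty_of_card_le (by
      rw [Fintype.card_subtype_compl, Fintype.card_subtype_eq]
      simp
      omega)
  have hep (t) : (e t : α) ≠ p := (e t).2
  have heinj {s t} (h : (e s : α) = e t) : s = t := e.injective (Subtype.ext h)
  -- The star: permutations whose supports pairwise meet in `p` only.
  have hstar (i : Fin (k + 2)) : ∃ g : Perm α, g.cycleType = A ∧
      (∀ x, x ∈ g.support ↔ x = p ∨ ∃ t, x = e (i, t)) ∧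
      ∀ x ∈ g.support, ∃ r, g.SameCycle r x ∧ (r = p ∨ ∃ t, r = e (i, Sum.inr t)) := by
    have hinj : Function.Injective fun t => (e (i, t) : α) := fun s t h => by
      simpa using heinj h
    obtain ⟨g, hgA, hgU, hgK⟩ := exists_cycleType_eq_of_support (α := α) hA
      (K := insert p (Finset.univ.image fun t => (e (i, Sum.inr t) : α)))
      (U := insert p (Finset.univ.image fun t => (e (i, t) : α)))
      (Finset.insert_subset_insert _ (by
        intro x
        simp only [Finset.mem_image, Finset.mem_univ, true_and]
        rintro ⟨t, rfl⟩
        exact ⟨_, rfl⟩))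
      (by
        rw [Finset.card_insert_of_notMem (by simp [hep]),
          Finset.card_image_of_injective _ fun s t h => Sum.inr_injective (hinj h)]
        simp [hk])
      (by
        rw [Finset.card_insert_of_notMem (by simp [hep]), Finset.card_image_of_injective _ hinj]
        simp [hsum, add_assoc])
    refine ⟨g, hgA, fun x => by simp [hgU, eq_comm], fun x hx => ?_⟩
    obtain ⟨r, hr, hrx⟩ := hgK x (hgU ▸ hx)
    exact ⟨r, hrx, by simpa [eq_comm] using hr⟩
  choose g hgA hgsupp hgrep using hstar
  have hgp (i) : g i p ≠ p := mem_support.1 ((hgsupp i p).2 (Or.inl rfl))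
  have hpair : Pairwise fun i j => (g i).support ∩ (g j).support = {p} := fun i j hij => by
    ext x
    simp only [Finset.mem_inter, hgsupp, Finset.mem_singleton]
    constructor
    · rintro ⟨rfl | ⟨s, rfl⟩, h | ⟨t, h⟩⟩
      · rfl
      · rfl
      · exact h
      · exact absurd (congrArg Prod.fst (heinj h)) hij
    · rintro rfl
      simp
  -- Representatives of the remaining orbits of the star, absorbed by permutations fixing `p`.
  let R : Finset α :=
    Finset.univ.erase p \
      Finset.univ.image fun t : Fin (k + 2) × Fin c => (e (t.1, Sum.inl t.2) : α)
  have hRcard : R.card ≤ l * c := by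
    rw [Finset.card_sdiff_of_subset (by
      intro x
      simp only [Finset.mem_image, Finset.mem_univ, true_and, Finset.mem_erase, and_true]
      rintro ⟨t, rfl⟩
      exact hep _), Finset.card_image_of_injective _ (fun s t h => by
        have := heinj h
        simp only [Prod.mk.injEq, Sum.inl.injEq] at this
        exact Prod.ext this.1 this.2)]
    simp only [Finset.card_erase_of_mem (Finset.mem_univ p), Finset.card_univ, Fintype.card_prod,
      Fintype.card_fin]
    have : c * (k + 2 + l) = (k + 2) * c + l * c := by ring
    omega
  obtain ⟨P, hPcard, hPcover⟩ := Finset.exists_cover_card_le hRcard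
  let K : Finset α := Finset.univ.image fun i : Fin (k + 1) => g i.castSucc p
  have hKcard : K.card = k + 1 := by
    rw [Finset.card_image_of_injective, Finset.card_univ, Fintype.card_fin]
    intro i j hij
    by_contra hne
    have hne' : i.castSucc ≠ j.castSucc := fun h => hne (Fin.castSucc_injective _ h)
    have hmem : g i.castSucc p ∈ (g i.castSucc).support ∩ (g j.castSucc).support := by
      refine Finset.mem_inter.2 ⟨?_, ?_⟩
      · rw [apply_mem_support]
        exact mem_support.2 (hgp _)
      · simp only at hij
        rw [hij, apply_mem_support]
        exact mem_support.2 (hgp _)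
    rw [hpair hne', Finset.mem_singleton] at hmem
    exact hgp _ hmem
  have hKp : K ⊆ Finset.univ.erase p := by
    intro x
    simp only [K, Finset.mem_image, Finset.mem_univ, true_and, Finset.mem_erase, and_true]
    rintro ⟨i, rfl⟩
    exact hgp _
  have habsorb (j : Fin l) : ∃ f : Perm α, f.cycleType = A ∧ f p = p ∧
      ∀ x ∈ P j, x ≠ p → ∃ r ∈ K, f.SameCycle r x := by
    have hle : c + (k + 1) ≤ (Finset.univ.erase p).card := by
      rw [Finset.card_erase_of_mem (Finset.mem_univ p), Finset.card_univ]
      have : 2 * (c + k) ≤ (k + 2) * (c + k) := Nat.mul_le_mul_right _ (by omega)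
      omega
    obtain ⟨U, hU, hUp, hUcard⟩ := Finset.exists_subsuperset_card_eq
      (s := K ∪ (P j).erase p) (n := c + (k + 1)) (t := Finset.univ.erase p)
      (Finset.union_subset hKp (Finset.erase_subset_erase _ (Finset.subset_univ _)))
      ((Finset.card_union_le _ _).trans (by
        have := hPcard j
        have := Finset.card_erase_le (s := P j) (a := p)
        omega)) hle
    obtain ⟨f, hfA, hfU, hfK⟩ := exists_cycleType_eq_of_support hA
      (Finset.subset_union_left.trans hU) (hKcard.trans hk.symm) (hUcard.trans hsum.symm)
    refine ⟨f, hfA, ?_, fun x hx hxp => hfK x (hU ?_)⟩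
    · rw [← notMem_support, hfU]
      exact fun h => by simpa using hUp h
    · exact Finset.mem_union_right _ (Finset.mem_erase.2 ⟨hxp, hx⟩)
  choose f hfA hfp hfrep using habsorb
  have hgen : Subgroup.closure (Set.range g ∪ Set.range f) = ⊤ := by
    have hgH (i) : g i ∈ Subgroup.closure (Set.range g ∪ Set.range f) :=
      Subgroup.subset_closure (Or.inl ⟨i, rfl⟩)
    have hfH (j) : f j ∈ Subgroup.closure (Set.range g ∪ Set.range f) :=
      Subgroup.subset_closure (Or.inr ⟨j, rfl⟩)
    have hp : ∃ h ∈ Subgroup.closure (Set.range g ∪ Set.range f), h p = p := ⟨1, one_mem _, rfl⟩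
    have hR : ∀ x ∈ R, ∃ h ∈ Subgroup.closure (Set.range g ∪ Set.range f), h p = x := by
      intro x hx
      obtain ⟨j, hj⟩ := hPcover x hx
      obtain ⟨r, hr, hrx⟩ := hfrep j x hj (by simp [R] at hx; exact hx.1)
      refine hrx.exists_mem_apply_eq (hfH j) ?_
      simp only [K, Finset.mem_image, Finset.mem_univ, true_and] at hr
      obtain ⟨i, rfl⟩ := hr
      exact ⟨_, hgH _, rfl⟩
    refine closure_eq_top_of_star hpair (by rintro _ ⟨j, rfl⟩; exact hfp j) (fun i => ?_)
      fun x => ?_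
    · rw [sign_of_cycleType, hgA, hsum, hk]
      refine Odd.neg_one_pow ?_
      obtain ⟨d, rfl⟩ := hodd
      exact ⟨d + k + 1, by ring⟩
    · by_cases hx : x ∈ R
      · exact hR x hx
      · rcases eq_or_ne x p with rfl | hxp
        · exact hp
        · simp only [R, Finset.mem_sdiff, Finset.mem_erase, ne_eq, hxp, not_false_eq_true,
            Finset.mem_univ, and_self, true_and, not_not, Finset.mem_image] at hx
          obtain ⟨⟨i, t⟩, rfl⟩ := hx
          obtain ⟨r, hrx, hr⟩ := hgrep i (e (i, Sum.inl t)) ((hgsupp i _).2 (Or.inr ⟨_, rfl⟩))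
          refine hrx.exists_mem_apply_eq (hgH i) ?_
          rcases hr with rfl | ⟨s, rfl⟩
          · exact hp
          · refine hR _ ?_
            simp only [R, Finset.mem_sdiff, Finset.mem_erase, Finset.mem_univ, and_true,
              Finset.mem_image, true_and]
            refine ⟨hep _, ?_⟩
            rintro ⟨t', h⟩
            simpa using heinj h
  refine ⟨Finset.univ.image g ∪ Finset.univ.image f, ?_, ?_, ?_⟩
  · simp only [Finset.mem_union, Finset.mem_image, Finset.mem_univ, true_and]
    rintro _ (⟨i, rfl⟩ | ⟨j, rfl⟩)
    · exact hgA i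
    · exact hfA j
  · simpa using hgen
  · refine (Finset.card_union_le _ _).trans (add_le_add ?_ ?_)
    · exact Finset.card_image_le.trans (by simp)
    · exact Finset.card_image_le.trans (by simp)

end Equiv.Perm

theorem Polynomial.lt_cyclotomic_two_mul_eval {k : ℕ} (hk : 0 < k) :
    ((2 * k : ℕ) : ℤ) < (cyclotomic (2 * k) ℤ).eval ((2 * k : ℕ) : ℤ) := by
  rcases (show k = 1 ∨ 2 ≤ k by omega) with rfl | hk2
  · simp
  have habs := sub_one_pow_totient_lt_natAbs_cyclotomic_eval (n := 2 * k) (q := 2 * k)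
    (by omega) (by omega)
  have hpos : 0 < (cyclotomic (2 * k) ℤ).eval ((2 * k : ℕ) : ℤ) :=
    cyclotomic_pos' _ (by exact_mod_cast (by omega : 1 < 2 * k))
  have htot : 2 ≤ Nat.totient (2 * k) := by
    obtain ⟨t, ht⟩ := Nat.totient_even (n := 2 * k) (by omega)
    have := Nat.totient_pos.2 (by omega : 0 < 2 * k)
    omega
  have hpow : (2 * k - 1) ^ 2 ≤ (2 * k - 1) ^ Nat.totient (2 * k) :=
    Nat.pow_le_pow_right (by omega) htot
  have hsq : 2 * k ≤ (2 * k - 1) ^ 2 := by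
    obtain ⟨d, rfl⟩ := Nat.exists_eq_add_of_le hk2
    rw [show 2 * (2 + d) - 1 = 2 * d + 3 by omega]
    nlinarith
  omega

/-- Let `A` be a nonempty multiset of `k` integers each `≥ 2` with
`c(A) = Σ (a_i − 1) = A.sum - A.card` odd. For all
`n ≥ c(A)·Φ_{2k}(2k) + 1` (with `Φ` the cyclotomic polynomial over ℤ), the
minimum cardinality of a subset of the extended conjugacy class `C(A)` in `S_n`
generating `S_n` is exactly `⌈(n−1)/c(A)⌉`. -/
theorem stmt_12 (A : Multiset ℕ) (hA : A ≠ 0) (hA2 : ∀ a ∈ A, 2 ≤ a)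
    (hodd : Odd (A.sum - Multiset.card A)) (n : ℕ)
    (hn : ((A.sum - Multiset.card A : ℕ) : ℤ) *
        (Polynomial.cyclotomic (2 * Multiset.card A) ℤ).eval ((2 * Multiset.card A : ℕ) : ℤ)
        + 1 ≤ (n : ℤ)) :
    IsLeast {c : ℕ | ∃ T : Finset (Equiv.Perm (Fin n)),
        (∀ g ∈ T, g.cycleType = A) ∧
        Subgroup.closure (T : Set (Equiv.Perm (Fin n))) = ⊤ ∧
        T.card = c} ((n - 1) ⌈/⌉ (A.sum - Multiset.card A)) := by
  set c := A.sum - Multiset.card A with hc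
  have hsum2 : Multiset.card A * 2 ≤ A.sum := by
    simpa using Multiset.card_nsmul_le_sum hA2
  have hcpos : 0 < c := hodd.pos
  obtain ⟨k, hk⟩ := Nat.exists_eq_add_one.2 (Multiset.card_pos.2 hA)
  have hsum : A.sum = c + (k + 1) := by omega
  have hkc : k + 1 ≤ c := by omega
  have hcyc := Polynomial.lt_cyclotomic_two_mul_eval (Multiset.card_pos.2 hA)
  have hn' : c * (2 * k + 3) < n := by
    zify
    rw [hk] at hcyc hn
    push_cast at hcyc hn
    nlinarith
  have : NeZero n := ⟨by omega⟩
  have hlow : (k + 2) * (c + k) < n := by nlinarith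
  have hle : k + 2 ≤ (n - 1) ⌈/⌉ c := by
    by_contra! hlt
    have := (ceilDiv_le_iff_le_mul hcpos).1 hlt.le
    nlinarith [Nat.sub_add_cancel (NeZero.one_le (n := n))]
  obtain ⟨l, hl⟩ := Nat.exists_eq_add_of_le hle
  have hlower : ∀ T : Finset (Equiv.Perm (Fin n)), (∀ g ∈ T, g.cycleType = A) →
      Subgroup.closure (T : Set (Equiv.Perm (Fin n))) = ⊤ → (n - 1) ⌈/⌉ c ≤ T.card := by
    intro T hTA hT
    have := Equiv.Perm.card_le_of_closure_eq_top (c := c)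
      (fun g hg => by rw [← Equiv.Perm.sum_cycleType, hTA g hg]; omega) hT
    rw [Fintype.card_fin] at this
    exact (ceilDiv_le_iff_le_mul hcpos).2 (by omega)
  constructor
  · obtain ⟨T, hTA, hT, hcard⟩ := Equiv.Perm.exists_generators_of_cycleType (α := Fin n) (l := l)
      hA2 hk hsum hodd (by rwa [Fintype.card_fin]) (by
        have := (ceilDiv_le_iff_le_mul hcpos).1 hl.le
        rw [Fintype.card_fin]
        omega)
    exact ⟨T, hTA, hT, le_antisymm (hcard.trans hl.ge) (hlower T hTA hT)⟩
  · rintro _ ⟨T, hTA, hT, rfl⟩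
    exact hlower T hTA hT
end
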